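/- Let d = 2 or d = 3, let 1 ≤ q < ∞ and 1 ≤ p ≤ ∞ with conjugate exponent p' (so 1/p + 1/p' = 1), let Δt > 0 and L ≥ 0 satisfy Δt·L ≤ 1/4, and let w₁, w₂ : ℝ^d → ℝ^d be everywhere-differentiable maps whose Jacobian matrices have Frobenius norm at most L at every point. Let v : ℝ^d → ℝ^m be continuously differentiable with compact support. Then ‖v ∘ X₁(w₁) − v ∘ X₁(w₂)‖_{L^q(ℝ^d)} ≤ 2^{1/(q·p')} · Δt · ‖w₁ − w₂‖_{L^{pq}(ℝ^d)} · ‖ ‖Dv‖_F ‖_{L^{q·p'}(ℝ^d)}, where X₁(wᵢ)(x) = x − Δt·wᵢ(x), ‖Dv‖_F denotes the pointwise Frobenius norm of the Jacobian matrix of v, the L^r-norms are with respect to Lebesgue measure (with the usual essential-supremum convention when r = ∞), and 2^{1/(q·p')} is interpreted as 1 when p' = ∞. -/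

import Mathlib

open MeasureTheory ENNReal

/-- The Frobenius norm of the Jacobian matrix of `f` at `x`. -/
noncomputable def jacobianFrobeniusNorm {d m : ℕ}
    (f : EuclideanSpace ℝ (Fin d) → EuclideanSpace ℝ (Fin m))
    (x : EuclideanSpace ℝ (Fin d)) : ℝ :=
  Real.sqrt (∑ i, ∑ j, (fderiv ℝ f x (EuclideanSpace.single j (1 : ℝ)) i) ^ 2)

/-- The pointwise Frobenius norm controls the action of the derivative. -/
lemma norm_fderiv_apply_le_jacobianFrobeniusNorm {d m : ℕ}
    (f : EuclideanSpace ℝ (Fin d) → EuclideanSpace ℝ (Fin m)) (x h : EuclideanSpace ℝ (Fin d)) :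
    ‖fderiv ℝ f x h‖ ≤ jacobianFrobeniusNorm f x * ‖h‖ := by
  have hcoord : ∀ i, fderiv ℝ f x h i =
      ∑ j, fderiv ℝ f x (EuclideanSpace.single j (1 : ℝ)) i * h j := by
    intro i
    conv_lhs => rw [← (EuclideanSpace.basisFun (Fin d) ℝ).sum_repr h]
    simp [mul_comm]
  refine le_of_sq_le_sq ?_ (mul_nonneg (Real.sqrt_nonneg _) (norm_nonneg _))
  rw [mul_pow, jacobianFrobeniusNorm,
    Real.sq_sqrt (Finset.sum_nonneg fun i _ => Finset.sum_nonneg fun j _ => sq_nonneg _),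
    EuclideanSpace.norm_sq_eq, EuclideanSpace.norm_sq_eq, Finset.sum_mul]
  refine Finset.sum_le_sum fun i _ => ?_
  simp only [Real.norm_eq_abs, sq_abs]
  rw [hcoord i]
  exact Finset.sum_mul_sq_le_sq_mul_sq _ _ _

lemma continuous_jacobianFrobeniusNorm {d m : ℕ}
    {f : EuclideanSpace ℝ (Fin d) → EuclideanSpace ℝ (Fin m)} (hf : ContDiff ℝ 1 f) :
    Continuous (jacobianFrobeniusNorm f) := by
  have := hf.continuous_fderiv one_ne_zero
  unfold jacobianFrobeniusNorm
  fun_prop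

/-- A Frobenius bound on Jacobians is preserved by convex combinations. -/
lemma jacobianFrobeniusNorm_convexCombination_le {d m : ℕ} {L s : ℝ} (hL : 0 ≤ L)
    (hs : s ∈ Set.Icc (0 : ℝ) 1)
    {f g : EuclideanSpace ℝ (Fin d) → EuclideanSpace ℝ (Fin m)}
    (hf : Differentiable ℝ f) (hg : Differentiable ℝ g) {x : EuclideanSpace ℝ (Fin d)}
    (hfL : jacobianFrobeniusNorm f x ≤ L) (hgL : jacobianFrobeniusNorm g x ≤ L) :
    jacobianFrobeniusNorm (fun y => (1 - s) • f y + s • g y) x ≤ L := by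
  have hderiv : fderiv ℝ (fun y => (1 - s) • f y + s • g y) x =
      (1 - s) • fderiv ℝ f x + s • fderiv ℝ g x :=
    (((hf x).hasFDerivAt.const_smul (1 - s)).add ((hg x).hasFDerivAt.const_smul s)).fderiv
  rw [jacobianFrobeniusNorm, Real.sqrt_le_left hL] at *
  calc _ ≤ ∑ i, ∑ j, ((1 - s) * (fderiv ℝ f x (EuclideanSpace.single j (1 : ℝ)) i) ^ 2 +
        s * (fderiv ℝ g x (EuclideanSpace.single j (1 : ℝ)) i) ^ 2) := by
        refine Finset.sum_le_sum fun i _ => Finset.sum_le_sum fun j _ => ?_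
        simp only [hderiv, add_apply, smul_apply,
          PiLp.add_apply, PiLp.smul_apply, smul_eq_mul]
        nlinarith [mul_nonneg (mul_nonneg hs.1 (sub_nonneg.2 hs.2))
          (sq_nonneg (fderiv ℝ f x (EuclideanSpace.single j (1 : ℝ)) i -
            fderiv ℝ g x (EuclideanSpace.single j (1 : ℝ)) i))]
    _ ≤ L ^ 2 := by
        simp only [Finset.sum_add_distrib, ← Finset.mul_sum]
        nlinarith [mul_le_mul_of_nonneg_left hfL (sub_nonneg.2 hs.2),
          mul_le_mul_of_nonneg_left hgL hs.1]

lemma half_le_det_one_sub_fin_two (A : Matrix (Fin 2) (Fin 2) ℝ)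
    (hA : ∑ i, ∑ j, A i j ^ 2 ≤ 1 / 16) : 1 / 2 ≤ (1 - A).det := by
  simp only [Fin.sum_univ_two] at hA
  simp only [Matrix.det_fin_two, Matrix.sub_apply, Matrix.one_apply]
  norm_num
  have htr : A 0 0 + A 1 1 ≤ 7 / 16 := by
    nlinarith [sq_nonneg (A 0 0 - A 1 1), sq_nonneg (A 0 1), sq_nonneg (A 1 0)]
  nlinarith [sq_nonneg (A 0 0 + A 1 1), sq_nonneg (A 0 1 - A 1 0)]

lemma half_le_det_one_sub_fin_three (A : Matrix (Fin 3) (Fin 3) ℝ)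
    (hA : ∑ i, ∑ j, A i j ^ 2 ≤ 1 / 16) : 1 / 2 ≤ (1 - A).det := by
  simp only [Fin.sum_univ_three] at hA
  simp only [Matrix.det_fin_three, Matrix.sub_apply, Matrix.one_apply, Fin.reduceEq, if_true,
    if_false]
  generalize A 0 0 = a, A 0 1 = b, A 0 2 = c, A 1 0 = d, A 1 1 = e, A 1 2 = f,
    A 2 0 = g, A 2 1 = h, A 2 2 = k at *
  have htr : a + e + k ≤ 7 / 16 := by
    nlinarith [sq_nonneg (a - e), sq_nonneg (a - k), sq_nonneg (e - k), sq_nonneg b, sq_nonneg c,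
      sq_nonneg d, sq_nonneg f, sq_nonneg g, sq_nonneg h]
  have hminors : -(1 / 32) ≤ a * e + a * k + e * k - b * d - c * g - f * h := by
    nlinarith [sq_nonneg (a + e + k), sq_nonneg (b - d), sq_nonneg (c - g), sq_nonneg (f - h)]
  have hentry : ∀ t u v : ℝ, t ^ 2 ≤ 1 / 16 → t * (u * v) ≤ (u ^ 2 + v ^ 2) / 8 := by
    intro t u v ht
    have h1 : |t| ≤ 1 / 4 := abs_le_of_sq_le_sq (by norm_num; linarith) (by norm_num)
    have h2 : |u * v| ≤ (u ^ 2 + v ^ 2) / 2 := by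
      rw [abs_le]; constructor <;> nlinarith [sq_nonneg (u + v), sq_nonneg (u - v)]
    calc t * (u * v) ≤ |t * (u * v)| := le_abs_self _
      _ = |t| * |u * v| := abs_mul _ _
      _ ≤ 1 / 4 * ((u ^ 2 + v ^ 2) / 2) := by gcongr
      _ = _ := by ring
  have ha : a ^ 2 ≤ 1 / 16 := by nlinarith
  have hb : b ^ 2 ≤ 1 / 16 := by nlinarith
  have hc : c ^ 2 ≤ 1 / 16 := by nlinarith
  have hdet : a * (e * k) - a * (f * h) - b * (d * k) + b * (f * g) + c * (d * h) - c * (e * g) ≤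
      1 / 64 := by
    linarith [hentry a e k ha, hentry (-a) f h (by simpa using ha),
      hentry (-b) d k (by simpa using hb), hentry b f g hb, hentry c d h hc,
      hentry (-c) e g (by simpa using hc), sq_nonneg a, sq_nonneg b, sq_nonneg c]
  linarith

/-- In dimension two or three, `id - Δt • Dw` has determinant at least `1 / 2`. -/
lemma half_le_det_id_sub_smul_fderiv {d : ℕ} (hd : d = 2 ∨ d = 3) {Δt L : ℝ} (hΔt : 0 < Δt)
    (hΔtL : Δt * L ≤ 1 / 4) {w : EuclideanSpace ℝ (Fin d) → EuclideanSpace ℝ (Fin d)}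
    {x : EuclideanSpace ℝ (Fin d)} (hJ : jacobianFrobeniusNorm w x ≤ L) :
    1 / 2 ≤ (ContinuousLinearMap.id ℝ _ - Δt • fderiv ℝ w x).det := by
  let b := (EuclideanSpace.basisFun (Fin d) ℝ).toBasis
  let A : Matrix (Fin d) (Fin d) ℝ :=
    Matrix.of fun i j => Δt * fderiv ℝ w x (EuclideanSpace.single j (1 : ℝ)) i
  have hdet : (ContinuousLinearMap.id ℝ _ - Δt • fderiv ℝ w x).det = (1 - A).det := by
    rw [ContinuousLinearMap.det, ← LinearMap.det_toMatrix b]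
    congr 1
    ext i j
    simp [b, A, LinearMap.toMatrix_apply, Matrix.one_apply]
  have hA : ∑ i, ∑ j, A i j ^ 2 ≤ 1 / 16 := by
    have hF : 0 ≤ jacobianFrobeniusNorm w x := Real.sqrt_nonneg _
    have hsq : ∑ i, ∑ j, A i j ^ 2 = (Δt * jacobianFrobeniusNorm w x) ^ 2 := by
      rw [mul_pow, jacobianFrobeniusNorm,
        Real.sq_sqrt (Finset.sum_nonneg fun i _ => Finset.sum_nonneg fun j _ => sq_nonneg _)]
      simp [A, mul_pow, Finset.mul_sum]
    have hle : Δt * jacobianFrobeniusNorm w x ≤ 1 / 4 :=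
      (mul_le_mul_of_nonneg_left hJ hΔt.le).trans hΔtL
    rw [hsq]
    nlinarith [mul_nonneg hΔt.le hF]
  rw [hdet]
  clear_value A
  rcases hd with rfl | rfl
  · exact half_le_det_one_sub_fin_two A hA
  · exact half_le_det_one_sub_fin_three A hA

lemma injective_id_sub_smul {d : ℕ} {Δt L : ℝ} (hΔt : 0 < Δt) (hΔtL : Δt * L ≤ 1 / 4)
    {w : EuclideanSpace ℝ (Fin d) → EuclideanSpace ℝ (Fin d)} (hw : Differentiable ℝ w)
    (hL : 0 ≤ L) (hJ : ∀ x, jacobianFrobeniusNorm w x ≤ L) :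
    Function.Injective fun x => x - Δt • w x := by
  intro x y hxy
  have hlip : ‖w x - w y‖ ≤ L * ‖x - y‖ :=
    Convex.norm_image_sub_le_of_norm_fderiv_le (𝕜 := ℝ) (s := Set.univ) (fun z _ => hw z)
      (fun z _ => ContinuousLinearMap.opNorm_le_bound _ hL fun h =>
        (norm_fderiv_apply_le_jacobianFrobeniusNorm w z h).trans (by gcongr; exact hJ z))
      convex_univ trivial trivial
  have heq : x - y = Δt • (w x - w y) := by
    have : x - Δt • w x = y - Δt • w y := hxy
    rw [smul_sub, sub_eq_sub_iff_add_eq_add]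
    rw [sub_eq_sub_iff_add_eq_add] at this
    rw [this, add_comm]
  have hnorm : ‖x - y‖ = Δt * ‖w x - w y‖ := by
    conv_lhs => rw [heq]
    rw [norm_smul, Real.norm_of_nonneg hΔt.le]
  have : ‖x - y‖ = 0 := by
    nlinarith [norm_nonneg (x - y), mul_le_mul_of_nonneg_left hlip hΔt.le,
      mul_le_mul_of_nonneg_right hΔtL (norm_nonneg (x - y))]
  exact sub_eq_zero.1 (norm_eq_zero.1 this)

/-- The image of Lebesgue measure under `x ↦ x - Δt • w x` is at most twice Lebesgue measure. -/
lemma map_id_sub_smul_volume_le {d : ℕ} (hd : d = 2 ∨ d = 3) {Δt L : ℝ} (hΔt : 0 < Δt)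
    (hL : 0 ≤ L) (hΔtL : Δt * L ≤ 1 / 4)
    {w : EuclideanSpace ℝ (Fin d) → EuclideanSpace ℝ (Fin d)} (hw : Differentiable ℝ w)
    (hJ : ∀ x, jacobianFrobeniusNorm w x ≤ L) :
    Measure.map (fun x => x - Δt • w x) volume ≤ (2 : ENNReal) • volume := by
  have hmeas : Measurable fun x => x - Δt • w x := by
    have := hw.continuous
    exact Continuous.measurable (by fun_prop)
  refine Measure.le_iff.2 fun A hA => ?_
  rw [Measure.map_apply hmeas hA, Measure.smul_apply, smul_eq_mul]
  set S := (fun x => x - Δt • w x) ⁻¹' A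
  have himage := lintegral_abs_det_fderiv_eq_addHaar_image volume (s := S) (hmeas hA)
    (fun x _ => ((hasFDerivAt_id x).sub
      ((hw x).hasFDerivAt.const_smul Δt)).hasFDerivWithinAt)
    (injective_id_sub_smul hΔt hΔtL hw hL hJ).injOn
  have hlower : (2 : ENNReal)⁻¹ * volume S ≤ volume A := by
    calc (2 : ENNReal)⁻¹ * volume S = ∫⁻ _ in S, (2 : ENNReal)⁻¹ := by simp
      _ ≤ ∫⁻ x in S, ENNReal.ofReal |(ContinuousLinearMap.id ℝ _ - Δt • fderiv ℝ w x).det| := by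
        refine lintegral_mono fun x => ?_
        have h := (half_le_det_id_sub_smul_fderiv hd hΔt hΔtL (hJ x)).trans (le_abs_self _)
        refine le_trans (le_of_eq ?_) (ENNReal.ofReal_le_ofReal h)
        rw [one_div, ENNReal.ofReal_inv_of_pos two_pos, ENNReal.ofReal_ofNat]
      _ = volume ((fun x => x - Δt • w x) '' S) := himage
      _ ≤ volume A := measure_mono (Set.image_preimage_subset _ _)
  rwa [ENNReal.inv_mul_le_iff two_ne_zero ofNat_ne_top] at hlower

/-- Composition with a map whose image measure is at most `c` times the target measure. -/
lemma eLpNorm_comp_le_of_map_le {α β E : Type*} [MeasurableSpace α] [MeasurableSpace β]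
    [NormedAddCommGroup E] {μ : Measure α} {ν : Measure β} {X : α → β} (hX : Measurable X)
    {c : ENNReal} (hc : c ≠ 0) (hmap : μ.map X ≤ c • ν) {f : β → E} (hf : StronglyMeasurable f)
    (r : ENNReal) :
    eLpNorm (fun x => f (X x)) r μ ≤ c ^ (r⁻¹).toReal * eLpNorm f r ν := by
  calc eLpNorm (fun x => f (X x)) r μ = eLpNorm f r (μ.map X) :=
        (eLpNorm_map_measure hf.aestronglyMeasurable hX.aemeasurable).symm
    _ ≤ eLpNorm f r (c • ν) := eLpNorm_mono_measure f hmap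
    _ = _ := by rw [eLpNorm_smul_measure_of_ne_zero hc, one_div, smul_eq_mul]

/-- Averaging in a parameter against a probability measure preserves uniform `L^q` bounds. -/
lemma eLpNorm_lintegral_le_of_ae_le {α β : Type*} [MeasurableSpace α] [MeasurableSpace β]
    {μ : Measure α} [SFinite μ] {ν : Measure β} [IsProbabilityMeasure ν] {G : α → β → ENNReal}
    (hG : Measurable (Function.uncurry G)) {q : ℝ} (hq : 1 ≤ q) {C : ENNReal}
    (hC : ∀ᵐ s ∂ν, eLpNorm (fun x => G x s) (ENNReal.ofReal q) μ ≤ C) :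
    eLpNorm (fun x => ∫⁻ s, G x s ∂ν) (ENNReal.ofReal q) μ ≤ C := by
  have hq0 : 0 < q := one_pos.trans_le hq
  have hnorm : ∀ g : α → ENNReal,
      eLpNorm g (ENNReal.ofReal q) μ ≤ C ↔ ∫⁻ x, g x ^ q ∂μ ≤ C ^ q := by
    intro g
    rw [eLpNorm_eq_lintegral_rpow_enorm_toReal (ENNReal.ofReal_pos.2 hq0).ne' ofReal_ne_top,
      ENNReal.toReal_ofReal hq0.le, one_div, ENNReal.rpow_inv_le_iff hq0]
    simp
  simp only [hnorm] at hC ⊢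
  calc ∫⁻ x, (∫⁻ s, G x s ∂ν) ^ q ∂μ ≤ ∫⁻ x, ∫⁻ s, G x s ^ q ∂ν ∂μ := by
        refine lintegral_mono fun x => ?_
        have h := eLpNorm'_le_eLpNorm'_of_exponent_le one_pos hq ν
          (f := G x) (hG.comp measurable_prodMk_left).aestronglyMeasurable
        simp only [eLpNorm'_eq_lintegral_enorm, enorm_eq_self, ENNReal.rpow_one, one_div,
          inv_one] at h
        exact (ENNReal.le_rpow_inv_iff hq0).1 h
    _ = ∫⁻ s, ∫⁻ x, G x s ^ q ∂μ ∂ν := lintegral_lintegral_swap (hG.pow_const q).aemeasurable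
    _ ≤ ∫⁻ _, C ^ q ∂ν := lintegral_mono_ae hC
    _ = C ^ q := by simp

/-- The increment of a `C¹` map is bounded by the integral over the segment of the Frobenius
norm of its Jacobian. -/
lemma enorm_sub_le_lintegral_jacobianFrobeniusNorm {d m : ℕ}
    {v : EuclideanSpace ℝ (Fin d) → EuclideanSpace ℝ (Fin m)} (hv : ContDiff ℝ 1 v)
    (a h : EuclideanSpace ℝ (Fin d)) :
    ‖v (a + h) - v a‖ₑ ≤
      ∫⁻ s in Set.Icc (0 : ℝ) 1, ‖jacobianFrobeniusNorm v (a + s • h) • h‖ₑ := by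
  have hγ : ContDiff ℝ 1 fun s : ℝ => v (a + s • h) := by fun_prop
  have hbound := enorm_sub_le_lintegral_deriv_of_contDiffOn_Icc hγ.contDiffOn zero_le_one
  simp only [one_smul, zero_smul, add_zero] at hbound
  refine hbound.trans (lintegral_mono fun s => ?_)
  have hline : HasDerivAt (fun s : ℝ => a + s • h) h s := by
    simpa using ((hasDerivAt_id s).smul_const h).const_add a
  have hderiv := ((hv.differentiable one_ne_zero _).hasFDerivAt.comp_hasDerivAt s hline).deriv
  have hderiv' : deriv (fun s : ℝ => v (a + s • h)) s = fderiv ℝ v (a + s • h) h := hderiv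
  rw [hderiv', enorm_le_iff_norm_le, norm_smul,
    Real.norm_of_nonneg (show 0 ≤ jacobianFrobeniusNorm v _ from Real.sqrt_nonneg _)]
  exact norm_fderiv_apply_le_jacobianFrobeniusNorm v _ h

/-- `L^q` estimate for the difference of compositions with two approximate
characteristic maps `X₁(wᵢ) : x ↦ x - Δt·wᵢ(x)`:
`‖v∘X₁(w₁) - v∘X₁(w₂)‖_{L^q} ≤ 2^{1/(q·p')}·Δt·‖w₁ - w₂‖_{L^{pq}}·‖ ‖Dv‖_F ‖_{L^{q·p'}}`. -/
theorem Lq_diff_comp_characteristic (d m : ℕ) (hd : d = 2 ∨ d = 3)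
    (q : ℝ) (hq : 1 ≤ q)
    (p p' : ENNReal) (hp : 1 ≤ p) (hp' : 1 ≤ p') (hconj : p⁻¹ + p'⁻¹ = 1)
    (Δt L : ℝ) (hΔt : 0 < Δt) (hL : 0 ≤ L) (hΔtL : Δt * L ≤ 1 / 4)
    (w₁ w₂ : EuclideanSpace ℝ (Fin d) → EuclideanSpace ℝ (Fin d))
    (hw₁ : Differentiable ℝ w₁) (hw₂ : Differentiable ℝ w₂)
    (hJ₁ : ∀ x, jacobianFrobeniusNorm w₁ x ≤ L)
    (hJ₂ : ∀ x, jacobianFrobeniusNorm w₂ x ≤ L)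
    (v : EuclideanSpace ℝ (Fin d) → EuclideanSpace ℝ (Fin m))
    (hv : ContDiff ℝ 1 v) (hvsupp : HasCompactSupport v) :
    eLpNorm (fun x => v (x - Δt • w₁ x) - v (x - Δt • w₂ x))
        (ENNReal.ofReal q) volume ≤
      (2 : ENNReal) ^ ((ENNReal.ofReal q * p')⁻¹).toReal * ENNReal.ofReal Δt *
        eLpNorm (fun x => w₁ x - w₂ x) (p * ENNReal.ofReal q) volume *
        eLpNorm (fun y => jacobianFrobeniusNorm v y) (ENNReal.ofReal q * p') volume := by
  let w : ℝ → EuclideanSpace ℝ (Fin d) → EuclideanSpace ℝ (Fin d) :=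
    fun s x => (1 - s) • w₂ x + s • w₁ x
  have hc₁ := hw₁.continuous
  have hc₂ := hw₂.continuous
  have hF := continuous_jacobianFrobeniusNorm hv
  let G : EuclideanSpace ℝ (Fin d) → ℝ → ENNReal := fun x s =>
    ‖jacobianFrobeniusNorm v (x - Δt • w s x) • (Δt • (w₁ x - w₂ x))‖ₑ
  have hG : Measurable (Function.uncurry G) := by
    refine Continuous.measurable ?_
    simp only [G, w, Function.uncurry_def]
    fun_prop
  have : IsProbabilityMeasure (volume.restrict (Set.Icc (0 : ℝ) 1)) := ⟨by simp⟩
  have hpointwise : ∀ x, ‖v (x - Δt • w₁ x) - v (x - Δt • w₂ x)‖ₑ ≤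
      ‖∫⁻ s in Set.Icc (0 : ℝ) 1, G x s‖ₑ := by
    intro x
    have h := enorm_sub_le_lintegral_jacobianFrobeniusNorm hv (x - Δt • w₂ x)
      (-(Δt • (w₁ x - w₂ x)))
    have hend : x - Δt • w₂ x + -(Δt • (w₁ x - w₂ x)) = x - Δt • w₁ x := by module
    rw [hend] at h
    refine h.trans_eq ?_
    rw [enorm_eq_self]
    refine lintegral_congr fun s => ?_
    have hs : x - Δt • w₂ x + s • -(Δt • (w₁ x - w₂ x)) = x - Δt • w s x := by
      simp only [w]; module
    rw [hs, smul_neg, enorm_neg]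
  refine (eLpNorm_mono_enorm hpointwise).trans
    (eLpNorm_lintegral_le_of_ae_le hG hq ((ae_restrict_iff' measurableSet_Icc).2
      (Filter.Eventually.of_forall fun s hs => ?_)))
  have hws : Differentiable ℝ (w s) := by
    simp only [w]
    fun_prop
  have hJs : ∀ x, jacobianFrobeniusNorm (w s) x ≤ L := fun x =>
    jacobianFrobeniusNorm_convexCombination_le hL hs hw₂ hw₁ (hJ₂ x) (hJ₁ x)
  have hX : Continuous fun x => x - Δt • w s x := by
    have := hws.continuous
    fun_prop
  have hcomp := eLpNorm_comp_le_of_map_le hX.measurable two_ne_zero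
    (map_id_sub_smul_volume_le hd hΔt hL hΔtL hws hJs) hF.stronglyMeasurable
    (ENNReal.ofReal q * p')
  have hq0 : ENNReal.ofReal q ≠ 0 := (ENNReal.ofReal_pos.2 (one_pos.trans_le hq)).ne'
  have hHolder : (ENNReal.ofReal q * p').HolderTriple (p * ENNReal.ofReal q)
      (ENNReal.ofReal q) := by
    refine ⟨?_⟩
    rw [ENNReal.mul_inv (.inl hq0) (.inl ofReal_ne_top),
      ENNReal.mul_inv (.inr ofReal_ne_top) (.inr hq0), mul_comm p⁻¹, ← mul_add,
      add_comm p'⁻¹, hconj, mul_one]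
  calc eLpNorm (fun x => G x s) (ENNReal.ofReal q) volume
      = eLpNorm ((fun x => jacobianFrobeniusNorm v (x - Δt • w s x)) •
          (Δt • fun x => w₁ x - w₂ x)) (ENNReal.ofReal q) volume := eLpNorm_enorm _
    _ ≤ eLpNorm (fun x => jacobianFrobeniusNorm v (x - Δt • w s x)) (ENNReal.ofReal q * p') volume *
          eLpNorm (Δt • fun x => w₁ x - w₂ x) (p * ENNReal.ofReal q) volume :=
        eLpNorm_smul_le_mul_eLpNorm
          ((hc₁.sub hc₂).const_smul Δt).aestronglyMeasurable
          (hF.comp hX).aestronglyMeasurable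
    _ ≤ (2 ^ ((ENNReal.ofReal q * p')⁻¹).toReal *
          eLpNorm (jacobianFrobeniusNorm v) (ENNReal.ofReal q * p') volume) *
          (ENNReal.ofReal Δt * eLpNorm (fun x => w₁ x - w₂ x) (p * ENNReal.ofReal q) volume) := by
        rw [eLpNorm_const_smul, Real.enorm_of_nonneg hΔt.le]
        gcongr
    _ = _ := by ring
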